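/- Lower bound for the diastole of torsion-free groups (Corollary 1.4): Let (X,σ) be a δ-hyperbolic GCB-space which is P0-packed at scale r0 and let Γ be a torsion-free, non-elementary, discrete group of σ-isometries of X. Suppose ε0 > 0 is such that nilrad(Γ,x) ≥ ε0 for every x ∈ X (such an ε0, depending only on P0 and r0, exists by the generalized Margulis lemma). Then the diastole satisfies dias(Γ,X) = sup_{x∈X} inf_{g∈Γ, g≠1} d(x, g x) ≥ ε0. -/

import Mathlib

open Metric Filter

/-- Four-points condition for `δ`-hyperbolicity. -/
def IsDeltaHyperbolic (X : Type*) [MetricSpace X] (δ : ℝ) : Prop :=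
  ∀ x y z w : X,
    dist x y + dist z w ≤ max (dist x z + dist y w) (dist x w + dist y z) + 2 * δ

/-- `X` is `P₀`-packed at scale `r₀`: any subset of a closed ball of radius `3r₀` whose
points are pairwise at distance `> 2r₀` has cardinality at most `P₀`. -/
def IsPacked (X : Type*) [MetricSpace X] (P₀ r₀ : ℝ) : Prop :=
  ∀ x : X, ∀ S : Finset X, (↑S ⊆ closedBall x (3 * r₀)) →
    (∀ a ∈ S, ∀ b ∈ S, a ≠ b → 2 * r₀ < dist a b) → (S.card : ℝ) ≤ P₀

/-- A geodesically complete, convex, consistent, reversible geodesic bicombing on `X`.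
Together with completeness of `X` this is the notion of GCB-space. -/
structure IsGCB {X : Type*} [MetricSpace X] (σ : X → X → ℝ → X) : Prop where
  source : ∀ x y : X, σ x y 0 = x
  target : ∀ x y : X, σ x y 1 = y
  geodesic : ∀ x y : X, ∀ t ∈ Set.Icc (0:ℝ) 1, ∀ t' ∈ Set.Icc (0:ℝ) 1,
    dist (σ x y t) (σ x y t') = |t - t'| * dist x y
  convex : ∀ x y x' y' : X,
    ConvexOn ℝ (Set.Icc (0:ℝ) 1) fun t => dist (σ x y t) (σ x' y' t)
  consistent : ∀ x y : X, ∀ s t l : ℝ, 0 ≤ s → s ≤ t → t ≤ 1 → l ∈ Set.Icc (0:ℝ) 1 →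
    σ (σ x y s) (σ x y t) l = σ x y ((1 - l) * s + l * t)
  reversible : ∀ x y : X, ∀ t ∈ Set.Icc (0:ℝ) 1, σ x y t = σ y x (1 - t)
  geodComplete : ∀ x y : X, ∃ γ : ℝ → X, Isometry γ ∧
    (∀ s t : ℝ, s ≤ t → ∀ l ∈ Set.Icc (0:ℝ) 1, σ (γ s) (γ t) l = γ (s + l * (t - s))) ∧
    (∀ t ∈ Set.Icc (0:ℝ) 1, σ x y t = γ (t * dist x y))

/-- `g` is a `σ`-isometry: a surjective isometry preserving the bicombing `σ`. -/
def IsSigmaIsometry {X : Type*} [MetricSpace X] (σ : X → X → ℝ → X) (g : X ≃ᵢ X) : Prop :=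
  ∀ x y : X, ∀ t ∈ Set.Icc (0:ℝ) 1, g (σ x y t) = σ (g x) (g y) t

/-- A group of isometries is discrete if for every `x` and `R` only finitely many of its
elements displace `x` at most `R`. -/
def IsDiscreteSubgroup {X : Type*} [MetricSpace X] (Γ : Subgroup (X ≃ᵢ X)) : Prop :=
  ∀ x : X, ∀ R : ℝ, {g : X ≃ᵢ X | g ∈ Γ ∧ dist x (g x) ≤ R}.Finite

/-- A group is virtually nilpotent if it has a nilpotent subgroup of finite index. -/
def IsVirtuallyNilpotent (G : Type*) [Group G] : Prop :=
  ∃ H : Subgroup G, H.FiniteIndex ∧ Group.IsNilpotent H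

/-- `Γ` is non-elementary: it contains two elements generating a subgroup that is not
virtually nilpotent. -/
def IsNonElementary {X : Type*} [MetricSpace X] (Γ : Subgroup (X ≃ᵢ X)) : Prop :=
  ∃ a b : X ≃ᵢ X, a ∈ Γ ∧ b ∈ Γ ∧
    ¬ IsVirtuallyNilpotent ↥(Subgroup.closure ({a, b} : Set (X ≃ᵢ X)))

/-- An isometry is non-elliptic if its orbits are unbounded. -/
def IsNonElliptic {X : Type*} [MetricSpace X] (g : X ≃ᵢ X) : Prop :=
  ∀ x : X, ¬ Bornology.IsBounded (Set.range fun n : ℤ => (g ^ n) x)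

/-- The `r`-almost stabilizer `Γ_r(x)`, generated by the elements of `Γ` displacing `x`
at most `r`. -/
def almostStabilizer {X : Type*} [MetricSpace X] (Γ : Subgroup (X ≃ᵢ X)) (r : ℝ) (x : X) :
    Subgroup (X ≃ᵢ X) :=
  Subgroup.closure {g : X ≃ᵢ X | g ∈ Γ ∧ dist x (g x) ≤ r}

/-- The nilpotence radius of `Γ` at `x`. -/
noncomputable def nilrad {X : Type*} [MetricSpace X] (Γ : Subgroup (X ≃ᵢ X)) (x : X) : ℝ :=
  sSup {r : ℝ | 0 ≤ r ∧ IsVirtuallyNilpotent ↥(almostStabilizer Γ r x)}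

/-- The Margulis domain `M_ε(g)`. -/
def margulisDomain {X : Type*} [MetricSpace X] (g : X ≃ᵢ X) (ε : ℝ) : Set X :=
  {x : X | dist x (g x) ≤ ε}

/-- The generalized Margulis domain `ℳ_ε(g) = ⋃_{i ≠ 0} M_ε(gⁱ)`. -/
def genMargulisDomain {X : Type*} [MetricSpace X] (g : X ≃ᵢ X) (ε : ℝ) : Set X :=
  ⋃ i ∈ {i : ℤ | i ≠ 0}, margulisDomain (g ^ i) ε

/-- `f` parameterizes a geodesic segment from `x` to `y` on `[0, dist x y]`. -/
def IsGeodesicFrom {X : Type*} [MetricSpace X] (f : ℝ → X) (x y : X) : Prop :=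
  f 0 = x ∧ f (dist x y) = y ∧
    ∀ s ∈ Set.Icc 0 (dist x y), ∀ t ∈ Set.Icc 0 (dist x y), dist (f s) (f t) = |s - t|

/-- `X` is a geodesic space. -/
def IsGeodesicSpace (X : Type*) [MetricSpace X] : Prop :=
  ∀ x y : X, ∃ f : ℝ → X, IsGeodesicFrom f x y

/-- `C` is `lam`-quasiconvex: any two of its points are joined by a geodesic contained in
the closed `lam`-neighbourhood of `C`. -/
def IsQuasiconvex {X : Type*} [MetricSpace X] (lam : ℝ) (C : Set X) : Prop :=
  ∀ x ∈ C, ∀ y ∈ C, ∃ f : ℝ → X, IsGeodesicFrom f x y ∧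
    ∀ t ∈ Set.Icc 0 (dist x y), infDist (f t) C ≤ lam

/-- `C` is a convex subset: any two of its points are joined by a geodesic inside `C`. -/
def IsConvexSubset {X : Type*} [MetricSpace X] (C : Set X) : Prop :=
  ∀ x ∈ C, ∀ y ∈ C, ∃ f : ℝ → X, IsGeodesicFrom f x y ∧
    ∀ t ∈ Set.Icc 0 (dist x y), f t ∈ C

/-- Arc-length concatenation of three paths, of respective lengths `d₁`, `d₂` and the rest. -/
noncomputable def concatPath {X : Type*} (d₁ d₂ : ℝ) (f₁ f₂ f₃ : ℝ → X) : ℝ → X :=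
  fun t => if t ≤ d₁ then f₁ t else if t ≤ d₁ + d₂ then f₂ (t - d₁) else f₃ (t - d₁ - d₂)

/-- The Gromov product `(p|q)_x`. -/
noncomputable def gromovProduct {X : Type*} [MetricSpace X] (x p q : X) : ℝ :=
  (dist x p + dist x q - dist p q) / 2

lemma gromovProduct_comm {X : Type*} [MetricSpace X] (x p q : X) :
    gromovProduct x p q = gromovProduct x q p := by
  unfold gromovProduct
  rw [dist_comm p q]
  ring

lemma gromovProduct_map {X : Type*} [MetricSpace X] (g : X ≃ᵢ X) (x p q : X) :
    gromovProduct (g x) (g p) (g q) = gromovProduct x p q := by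
  simp [gromovProduct, g.dist_eq]

lemma gromovProduct_sub_dist_le {X : Type*} [MetricSpace X] (x x' p q : X) :
    gromovProduct x p q - dist x x' ≤ gromovProduct x' p q := by
  unfold gromovProduct
  linarith [dist_triangle x x' p, dist_triangle x x' q]

lemma gromovProduct_sub_dist_right_le {X : Type*} [MetricSpace X] (x p q q' : X) :
    gromovProduct x p q - dist q q' ≤ gromovProduct x p q' := by
  unfold gromovProduct
  linarith [dist_triangle p q q', dist_triangle x q' q, dist_comm q q']

lemma dist_sub_dist_le_gromovProduct {X : Type*} [MetricSpace X] (x p q : X) :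
    dist x p - dist p q ≤ gromovProduct x p q := by
  unfold gromovProduct
  linarith [dist_triangle x q p, dist_comm p q]

lemma IsDeltaHyperbolic.min_gromovProduct_sub_le {X : Type*} [MetricSpace X] {δ : ℝ}
    (hX : IsDeltaHyperbolic X δ) (x p q s : X) :
    min (gromovProduct x p q) (gromovProduct x q s) - δ ≤ gromovProduct x p s := by
  have h := hX p s x q
  unfold gromovProduct
  rw [dist_comm p x, dist_comm s x, dist_comm s q] at h
  rcases max_cases (dist x p + dist q s) (dist p q + dist x s) with h' | h' <;>
    rcases min_cases ((dist x p + dist x q - dist p q) / 2)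
      ((dist x q + dist x s - dist q s) / 2) with h'' | h'' <;> linarith

/-- If `p` is almost fixed by `g` as seen from `x`, then `g` moves `x` along the geodesic
to `p`. -/
lemma IsDeltaHyperbolic.dist_add_dist_le {X : Type*} [MetricSpace X] {δ : ℝ}
    (hX : IsDeltaHyperbolic X δ) (g : X ≃ᵢ X) {x p : X}
    (hp : dist x (g x) + δ < gromovProduct x p (g p)) :
    dist (g x) p + dist x (g p) ≤ 2 * dist x p + 2 * δ := by
  have h := hX (g x) p x (g p)
  have h1 : dist (g x) (g p) = dist x p := g.dist_eq x p
  unfold gromovProduct at hp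
  rw [dist_comm (g x) x, h1, dist_comm p x] at h
  rcases max_cases (dist x (g x) + dist p (g p)) (dist x p + dist x p) with h' | h'
  · linarith [dist_triangle x (g x) p]
  · linarith

lemma IsDeltaHyperbolic.displacement_le_of_gromovProduct_le {X : Type*} [MetricSpace X] {δ : ℝ}
    (hX : IsDeltaHyperbolic X δ) (g : X ≃ᵢ X) {x p : X} {C : ℝ}
    (hp : dist x (g x) + δ < gromovProduct x p (g p))
    (h1 : gromovProduct x p (g x) ≤ C + δ) (h2 : gromovProduct (g x) (g p) x ≤ C + δ) :
    dist x (g x) ≤ 2 * C + 3 * δ := by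
  have h := hX.dist_add_dist_le g hp
  have h3 : dist (g x) (g p) = dist x p := g.dist_eq x p
  unfold gromovProduct at h1 h2
  rw [h3, dist_comm (g x) x, dist_comm (g p) x] at h2
  rw [dist_comm p (g x)] at h1
  linarith

/-- An isometry coarsely fixing the three ends of a tripod moves its centre a bounded amount. -/
lemma IsDeltaHyperbolic.displacement_le_of_tripod {X : Type*} [MetricSpace X] {δ : ℝ}
    (hX : IsDeltaHyperbolic X δ) (g : X ≃ᵢ X) {x p q s : X} {C : ℝ}
    (hpq : gromovProduct x p q ≤ C) (hps : gromovProduct x p s ≤ C)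
    (hqs : gromovProduct x q s ≤ C)
    (hp : dist x (g x) + δ < gromovProduct x p (g p))
    (hq : dist x (g x) + δ < gromovProduct x q (g q))
    (hs : dist x (g x) + δ < gromovProduct x s (g s)) :
    dist x (g x) ≤ 2 * C + 3 * δ := by
  have key : ∀ a b : X, gromovProduct x a b ≤ C →
      (gromovProduct x a (g x) ≤ C + δ ∨ gromovProduct x b (g x) ≤ C + δ) ∧
      (gromovProduct (g x) (g a) x ≤ C + δ ∨ gromovProduct (g x) (g b) x ≤ C + δ) := by
    intro a b hab
    have h1 := hX.min_gromovProduct_sub_le x a (g x) b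
    have h2 := hX.min_gromovProduct_sub_le (g x) (g a) x (g b)
    rw [gromovProduct_map] at h2
    rw [gromovProduct_comm x (g x) b] at h1
    rw [gromovProduct_comm (g x) x (g b)] at h2
    exact ⟨min_le_iff.1 (by linarith), min_le_iff.1 (by linarith)⟩
  have Hp := hX.displacement_le_of_gromovProduct_le (C := C) g hp
  have Hq := hX.displacement_le_of_gromovProduct_le (C := C) g hq
  have Hs := hX.displacement_le_of_gromovProduct_le (C := C) g hs
  have := key p q hpq
  have := key p s hps
  have := key q s hqs
  tauto

/-- If `x` lies on a geodesic from `y` to an almost fixed end of `g`, then the displacement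
at `x` is controlled by the displacement at `y`. -/
lemma IsDeltaHyperbolic.displacement_le_of_between {X : Type*} [MetricSpace X] {δ : ℝ}
    (hδ : 0 ≤ δ) (hX : IsDeltaHyperbolic X δ) (g : X ≃ᵢ X) {x y p : X}
    (hxy : dist y p = dist x y + dist x p)
    (hp : dist x (g x) + δ < gromovProduct x p (g p)) :
    dist x (g x) ≤ 2 * dist y (g y) + 3 * δ := by
  have h := hX.dist_add_dist_le g hp
  have h1 := hX x (g x) y p
  have h2 := hX x (g x) (g p) (g y)
  have e1 : dist (g x) (g p) = dist x p := g.dist_eq x p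
  have e2 : dist (g y) (g p) = dist y p := g.dist_eq y p
  have e3 : dist (g x) (g y) = dist x y := g.dist_eq x y
  have t1 := dist_triangle (g x) (g y) y
  have t2 := dist_triangle x y (g y)
  have t3 : (0 : ℝ) ≤ dist y (g y) := dist_nonneg
  rw [dist_comm (g y) y] at t1
  rw [dist_comm (g p) (g y), e2, e1, e3] at h2
  rcases max_cases (dist x y + dist (g x) p) (dist x p + dist (g x) y) with h' | h' <;>
    rcases max_cases (dist x (g p) + dist x y) (dist x (g y) + dist x p) with h'' | h'' <;>
    linarith

/-- Two ultrafilters are asymptotic if they represent the same point at infinity. -/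
def IsAsymptotic {X : Type*} [MetricSpace X] (U V : Ultrafilter X) : Prop :=
  ∀ (x : X) (C : ℝ), ∃ A ∈ U, ∃ B ∈ V, ∀ p ∈ A, ∀ q ∈ B, C < gromovProduct x p q

namespace IsAsymptotic

variable {X : Type*} [MetricSpace X] {δ : ℝ} {U V W : Ultrafilter X}

lemma of_basepoint (x : X)
    (h : ∀ C : ℝ, ∃ A ∈ U, ∃ B ∈ V, ∀ p ∈ A, ∀ q ∈ B, C < gromovProduct x p q) :
    IsAsymptotic U V := by
  intro x' C
  obtain ⟨A, hA, B, hB, hAB⟩ := h (C + dist x x')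
  refine ⟨A, hA, B, hB, fun p hp q hq => ?_⟩
  linarith [hAB p hp q hq, gromovProduct_sub_dist_le x x' p q]

lemma symm (h : IsAsymptotic U V) : IsAsymptotic V U := by
  intro x C
  obtain ⟨A, hA, B, hB, hAB⟩ := h x C
  exact ⟨B, hB, A, hA, fun p hp q hq => gromovProduct_comm x q p ▸ hAB q hq p hp⟩

lemma trans (hX : IsDeltaHyperbolic X δ) (h : IsAsymptotic U V) (h' : IsAsymptotic V W) :
    IsAsymptotic U W := by
  intro x C
  obtain ⟨A, hA, B, hB, hAB⟩ := h x (C + δ)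
  obtain ⟨B', hB', D, hD, hBD⟩ := h' x (C + δ)
  obtain ⟨q, hq, hq'⟩ := V.nonempty_of_mem (inter_mem hB hB')
  refine ⟨A, hA, D, hD, fun p hp s hs => ?_⟩
  have := lt_min (hAB p hp q hq) (hBD q hq' s hs)
  linarith [hX.min_gromovProduct_sub_le x p q s]

lemma map (g : X ≃ᵢ X) (h : IsAsymptotic U V) : IsAsymptotic (U.map g) (V.map g) := by
  intro x C
  obtain ⟨A, hA, B, hB, hAB⟩ := h (g⁻¹ x) C
  refine ⟨g '' A, Filter.image_mem_map hA, g '' B, Filter.image_mem_map hB, ?_⟩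
  rintro _ ⟨p, hp, rfl⟩ _ ⟨q, hq, rfl⟩
  rw [← g.apply_inv_self x, gromovProduct_map]
  exact hAB p hp q hq

lemma map_mul (hX : IsDeltaHyperbolic X δ) {g h : X ≃ᵢ X} (hg : IsAsymptotic (U.map g) U)
    (hh : IsAsymptotic (U.map h) U) : IsAsymptotic (U.map (g * h : X ≃ᵢ X)) U := by
  have := hh.map g
  rw [Ultrafilter.map_map] at this
  exact this.trans hX hg

lemma map_pow (hX : IsDeltaHyperbolic X δ) {g : X ≃ᵢ X} (hU : IsAsymptotic U U)
    (hg : IsAsymptotic (U.map g) U) (n : ℕ) : IsAsymptotic (U.map (g ^ n : X ≃ᵢ X)) U := by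
  induction n with
  | zero =>
    have : ((g ^ 0 : X ≃ᵢ X) : X → X) = id := by ext; simp
    rwa [this, Ultrafilter.map_id]
  | succ n ih =>
    rw [pow_succ]
    exact map_mul hX ih hg

/-- Points far along an end almost fixed by `g` have large Gromov product with their image. -/
lemma eventually_lt_gromovProduct {g : X ≃ᵢ X} (hg : IsAsymptotic (U.map g) U) (x : X) (C : ℝ) :
    ∀ᶠ p in (U : Filter X), C < gromovProduct x p (g p) := by
  obtain ⟨A, hA, B, hB, hAB⟩ := hg x C
  rw [Ultrafilter.mem_map] at hA
  filter_upwards [hA, hB] with p hp hp'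
  rw [gromovProduct_comm]
  exact hAB _ hp _ hp'

/-- Non-asymptotic ends have uniformly bounded Gromov product. -/
lemma exists_gromovProduct_le (hX : IsDeltaHyperbolic X δ) (hU : IsAsymptotic U U)
    (hV : IsAsymptotic V V) (h : ¬ IsAsymptotic U V) (x : X) :
    ∃ C : ℝ, ∃ A ∈ U, ∃ B ∈ V, ∀ p ∈ A, ∀ q ∈ B, gromovProduct x p q ≤ C := by
  by_contra! hcon
  refine h (of_basepoint x fun C => ?_)
  obtain ⟨A, hA, A', hA', hAA⟩ := hU x (C + 2 * δ)
  obtain ⟨B, hB, B', hB', hBB⟩ := hV x (C + δ)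
  obtain ⟨p, hp, q, hq, hpq⟩ := hcon (C + 2 * δ) A' hA' B hB
  refine ⟨A, hA, B', hB', fun p' hp' q' hq' => ?_⟩
  have h1 := hX.min_gromovProduct_sub_le x p' p q
  have h2 := hX.min_gromovProduct_sub_le x p' q q'
  have h3 := lt_min (hAA p' hp' p hp) hpq
  have h4 : C + δ < min (gromovProduct x p' q) (gromovProduct x q q') :=
    lt_min (by linarith) (hBB q hq q' hq')
  linarith

end IsAsymptotic

/-- The isometry `g` has infinite order and generates a discrete group. -/
def HasProperOrbits {X : Type*} [MetricSpace X] (g : X ≃ᵢ X) : Prop :=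
  ∀ (x : X) (R : ℝ), {n : ℤ | dist x ((g ^ n) x) ≤ R}.Finite

namespace HasProperOrbits

variable {X : Type*} [MetricSpace X] {δ : ℝ} {g : X ≃ᵢ X}

lemma sq (hg : HasProperOrbits g) : HasProperOrbits (g ^ 2) := by
  intro x R
  have h := (hg x R).preimage (f := fun n : ℤ => 2 * n)
    (fun a _ b _ hab => by simpa using hab)
  refine h.subset fun n hn => ?_
  simpa [zpow_mul] using hn

lemma exists_pow_lt (hg : HasProperOrbits g) (x : X) (R : ℝ) :
    ∃ n : ℕ, R < dist x ((g ^ n) x) := by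
  by_contra! h
  refine Set.infinite_of_injective_forall_mem Nat.cast_injective (fun n : ℕ => ?_) (hg x R)
  simpa using h n

/-- An infinite order isometry fixes at most two points at infinity. -/
lemma asymptotic_of_three (hX : IsDeltaHyperbolic X δ) (hg : HasProperOrbits g) (x : X)
    {U V W : Ultrafilter X} (hU : IsAsymptotic U U) (hV : IsAsymptotic V V)
    (hW : IsAsymptotic W W) (gU : IsAsymptotic (U.map g) U) (gV : IsAsymptotic (V.map g) V)
    (gW : IsAsymptotic (W.map g) W) :
    IsAsymptotic U V ∨ IsAsymptotic U W ∨ IsAsymptotic V W := by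
  by_contra! h
  obtain ⟨C₁, A₁, hA₁, B₁, hB₁, h₁⟩ := IsAsymptotic.exists_gromovProduct_le hX hU hV h.1 x
  obtain ⟨C₂, A₂, hA₂, B₂, hB₂, h₂⟩ := IsAsymptotic.exists_gromovProduct_le hX hU hW h.2.1 x
  obtain ⟨C₃, A₃, hA₃, B₃, hB₃, h₃⟩ := IsAsymptotic.exists_gromovProduct_le hX hV hW h.2.2 x
  obtain ⟨n, hn⟩ := hg.exists_pow_lt x (2 * max C₁ (max C₂ C₃) + 3 * δ)
  obtain ⟨p, hp, hp₁, hp₂⟩ := (((hU.map_pow hX gU n).eventually_lt_gromovProduct x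
    (dist x ((g ^ n) x) + δ)).and (Filter.inter_mem hA₁ hA₂)).exists
  obtain ⟨q, hq, hq₁, hq₂⟩ := (((hV.map_pow hX gV n).eventually_lt_gromovProduct x
    (dist x ((g ^ n) x) + δ)).and (Filter.inter_mem hB₁ hA₃)).exists
  obtain ⟨s, hs, hs₁, hs₂⟩ := (((hW.map_pow hX gW n).eventually_lt_gromovProduct x
    (dist x ((g ^ n) x) + δ)).and (Filter.inter_mem hB₂ hB₃)).exists
  refine hn.not_ge (hX.displacement_le_of_tripod (g ^ n) ?_ ?_ ?_ hp hq hs)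
  · exact (h₁ p hp₁ q hq₁).trans (le_max_left _ _)
  · exact (h₂ p hp₂ s hs₁).trans ((le_max_left _ _).trans (le_max_right _ _))
  · exact (h₃ q hq₂ s hs₂).trans ((le_max_right _ _).trans (le_max_right _ _))

lemma dist_pow_le (g : X ≃ᵢ X) (p : X) (n : ℕ) : dist p ((g ^ n) p) ≤ n * dist p (g p) := by
  induction n with
  | zero => simp
  | succ n ih =>
    have h1 := dist_triangle p ((g ^ n) p) ((g ^ (n + 1)) p)
    have h2 : dist ((g ^ n) p) ((g ^ (n + 1)) p) = dist p (g p) := by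
      rw [pow_succ, IsometryEquiv.mul_apply, IsometryEquiv.dist_eq]
    push_cast
    linarith

/-- An ultrafilter escaping to infinity along which `g` has bounded displacement converges to a
point at infinity, which is fixed by `g`. -/
lemma isAsymptotic_of_bounded (hX : IsDeltaHyperbolic X δ) (hg : HasProperOrbits g) (x : X)
    {U : Ultrafilter X} {R : ℝ} (hfar : ∀ M : ℝ, ∀ᶠ p in (U : Filter X), M < dist x p)
    (hR : ∀ᶠ p in (U : Filter X), dist p (g p) ≤ R) :
    IsAsymptotic U U ∧ IsAsymptotic (U.map g) U := by
  have main : ∀ C : ℝ, ∀ᶠ p in (U : Filter X), ∀ᶠ q in (U : Filter X),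
      C < gromovProduct x p q := by
    by_contra! ⟨C, hC⟩
    obtain ⟨n, hn⟩ := hg.exists_pow_lt x (2 * C + 3 * δ)
    have hlarge : ∀ᶠ p in (U : Filter X),
        dist x ((g ^ n) x) + δ < gromovProduct x p ((g ^ n) p) := by
      filter_upwards [hfar (dist x ((g ^ n) x) + δ + n * R), hR] with p h1 h2
      have h3 := dist_pow_le g p n
      have h4 : (n : ℝ) * dist p (g p) ≤ n * R := by gcongr
      linarith [dist_sub_dist_le_gromovProduct x p ((g ^ n) p)]
    obtain ⟨p, hp, hp'⟩ := (hC.and hlarge).exists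
    obtain ⟨q, ⟨hq, hq'⟩, hpq⟩ := ((hC.and hlarge).and hp).exists
    obtain ⟨s, ⟨hs, hs'⟩, hps⟩ := ((hq.and hlarge).and hp).exists
    exact hn.not_ge (hX.displacement_le_of_tripod (g ^ n) hpq hps hs hp' hq' hs')
  have hU : IsAsymptotic U U := by
    refine IsAsymptotic.of_basepoint x fun C => ?_
    obtain ⟨p, hp⟩ := (main (C + δ)).exists
    refine ⟨_, hp, _, hp, fun q hq s hs => ?_⟩
    simp only [Set.mem_ofPred_eq] at hq hs
    have := hX.min_gromovProduct_sub_le x q p s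
    rw [gromovProduct_comm x q p] at this
    linarith [lt_min hq hs]
  refine ⟨hU, IsAsymptotic.symm (IsAsymptotic.of_basepoint x fun C => ?_)⟩
  obtain ⟨A, hA, B, hB, hAB⟩ := hU x (C + R)
  refine ⟨A, hA, g '' (B ∩ {p | dist p (g p) ≤ R}),
    Filter.image_mem_map (Filter.inter_mem hB hR), ?_⟩
  rintro p hp _ ⟨q, ⟨hq, hq'⟩, rfl⟩
  simp only [Set.mem_ofPred_eq] at hq'
  linarith [hAB p hp q hq, gromovProduct_sub_dist_right_le x p q (g q)]

end HasProperOrbits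

/-- The points at infinity fixed by the square of `g`. -/
def limitEnds {X : Type*} [MetricSpace X] (g : X ≃ᵢ X) : Set (Ultrafilter X) :=
  {U | IsAsymptotic U U ∧ IsAsymptotic (U.map (g ^ 2 : X ≃ᵢ X)) U}

namespace HasProperOrbits

variable {X : Type*} [MetricSpace X] {δ : ℝ} {g h : X ≃ᵢ X}

lemma limitEnds_nonempty (hX : IsDeltaHyperbolic X δ) (hg : HasProperOrbits g) (x : X) :
    (limitEnds g).Nonempty := by
  have hg2 := hg.sq
  refine ⟨(hyperfilter ℕ).map fun n : ℕ => (g ^ n) x,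
    hg2.isAsymptotic_of_bounded hX x (R := dist x ((g ^ 2) x)) (fun M => ?_) ?_⟩
  · change ∀ᶠ n : ℕ in (hyperfilter ℕ : Filter ℕ), M < dist x ((g ^ n) x)
    have : {n : ℕ | dist x ((g ^ n) x) ≤ M}.Finite := by
      refine ((hg x M).preimage (f := fun n : ℕ => (n : ℤ)) Nat.cast_injective.injOn).subset ?_
      intro n hn
      simpa using hn
    filter_upwards [Filter.compl_mem_hyperfilter_of_finite this] with n hn
    simpa using hn
  · change ∀ᶠ n : ℕ in (hyperfilter ℕ : Filter ℕ),
      dist ((g ^ n) x) ((g ^ 2) ((g ^ n) x)) ≤ dist x ((g ^ 2) x)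
    refine Eventually.of_forall fun n => le_of_eq ?_
    rw [← IsometryEquiv.mul_apply, ← pow_add, add_comm, pow_add, IsometryEquiv.mul_apply,
      IsometryEquiv.dist_eq]

lemma limitEnds_subset_of_commute (hX : IsDeltaHyperbolic X δ) (hg : HasProperOrbits g) (x : X)
    (hgh : Commute g h) : limitEnds g ⊆ limitEnds h := by
  rintro U ⟨hU, gU⟩
  have hmap : ∀ (V : Ultrafilter X), IsAsymptotic (V.map (g ^ 2 : X ≃ᵢ X)) V →
      IsAsymptotic ((V.map h).map (g ^ 2 : X ≃ᵢ X)) (V.map h) := by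
    intro V hV
    have h1 := hV.map h
    rw [Ultrafilter.map_map] at h1 ⊢
    have : (h ∘ (g ^ 2 : X ≃ᵢ X) : X → X) = (g ^ 2 : X ≃ᵢ X) ∘ h := by
      ext y
      change (h * g ^ 2) y = (g ^ 2 * h) y
      rw [(hgh.pow_left 2).eq]
    rwa [this] at h1
  have e : (U.map h).map h = U.map (h ^ 2 : X ≃ᵢ X) := by
    rw [Ultrafilter.map_map, pow_two]
    rfl
  have h3 := hg.sq.asymptotic_of_three hX x hU (hU.map h) ((hU.map h).map h) gU (hmap _ gU)
    (hmap _ (hmap _ gU))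
  rw [e] at h3
  refine ⟨hU, ?_⟩
  rcases h3 with h3 | h3 | h3
  · have := h3.map h
    rw [e] at this
    exact (h3.trans hX this).symm
  · exact h3.symm
  · have h4 : IsAsymptotic (U.map h) ((U.map h).map h) := by rwa [e]
    have h5 := h4.map h⁻¹
    simp only [Ultrafilter.map_map] at h5
    have e1 : (h⁻¹ : X ≃ᵢ X) ∘ h = id := by ext; simp
    have e2 : (h⁻¹ : X ≃ᵢ X) ∘ h ∘ h = h := by ext; simp
    rw [e1, e2, Ultrafilter.map_id] at h5
    exact (h5.trans hX (by rwa [e] at h4)).symm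

lemma limitEnds_eq_of_commute (hX : IsDeltaHyperbolic X δ) (hg : HasProperOrbits g)
    (hh : HasProperOrbits h) (x : X) (hgh : Commute g h) : limitEnds g = limitEnds h :=
  (hg.limitEnds_subset_of_commute hX x hgh).antisymm
    (hh.limitEnds_subset_of_commute hX x hgh.symm)

end HasProperOrbits

/-- In a geodesically complete bicombing every segment can be extended backwards. -/
lemma IsGCB.exists_extension {X : Type*} [MetricSpace X] {σ : X → X → ℝ → X} (hσ : IsGCB σ)
    (x p : X) {T : ℝ} (hT : 0 ≤ T) :
    ∃ y : X, dist x y = T ∧ dist y p = dist x y + dist x p := by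
  obtain ⟨γ, hγ, -, h⟩ := hσ.geodComplete x p
  have h0 : x = γ 0 := by simpa [hσ.source] using h 0 (by simp)
  have h1 : p = γ (dist x p) := by simpa [hσ.target] using h 1 (by simp)
  have hxy : dist x (γ (-T)) = T := by
    nth_rewrite 1 [h0]
    rw [hγ.dist_eq, Real.dist_eq, zero_sub, neg_neg, abs_of_nonneg hT]
  refine ⟨γ (-T), hxy, ?_⟩
  rw [hxy]
  nth_rewrite 1 [h1]
  rw [hγ.dist_eq, Real.dist_eq, abs_sub_comm, sub_neg_eq_add, add_comm T, abs_of_nonneg]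
  positivity

lemma IsGCB.preconnectedSpace {X : Type*} [MetricSpace X] {σ : X → X → ℝ → X} (hσ : IsGCB σ) :
    PreconnectedSpace X := by
  refine ⟨isPreconnected_of_forall_pair fun x _ y _ => ?_⟩
  refine ⟨σ x y '' Set.Icc 0 1, Set.subset_univ _, ⟨0, by simp, hσ.source x y⟩,
    ⟨1, by simp, hσ.target x y⟩, isPreconnected_Icc.image _ ?_⟩
  refine (LipschitzOnWith.of_dist_le_mul (K := ⟨dist x y, dist_nonneg⟩)
    fun t ht t' ht' => ?_).continuousOn
  rw [hσ.geodesic x y t ht t' ht', Real.dist_eq, mul_comm]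
  rfl

/-- If every point is little displaced by an element of `Γ` fixing the end `U`, then every point
`x` is coarsely on a geodesic from `U` to another end fixed by some such element. -/
lemma exists_opposite_end {X : Type*} [MetricSpace X] {δ R : ℝ} (hδ : 0 ≤ δ)
    (hX : IsDeltaHyperbolic X δ) {σ : X → X → ℝ → X} (hσ : IsGCB σ) {Γ : Subgroup (X ≃ᵢ X)}
    (hΓ : IsDiscreteSubgroup Γ) {U : Ultrafilter X} {S : Set (Ultrafilter X)}
    (hU : IsAsymptotic U U)
    (hsmall : ∀ y : X, ∃ h ∈ Γ, HasProperOrbits h ∧ IsAsymptotic (U.map h) U ∧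
      limitEnds h = S ∧ dist y (h y) ≤ R) (x : X) :
    ∃ V ∈ S, ∃ B ∈ V, ∃ A ∈ U, ∀ y ∈ B, ∀ p ∈ A, gromovProduct x y p ≤ δ := by
  obtain ⟨A, hA, A', hA', hAA⟩ := hU x δ
  have step : ∀ T : ℕ, ∃ (y : X) (h : X ≃ᵢ X), dist x y = T ∧
      (∀ p ∈ A', gromovProduct x y p ≤ δ) ∧ h ∈ Γ ∧ HasProperOrbits h ∧ limitEnds h = S ∧
      dist y (h y) ≤ R ∧ dist x (h x) ≤ 2 * R + 3 * δ := by
    intro T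
    have hfin := hΓ x (R + 2 * T)
    have hev : ∀ᶠ p in (U : Filter X), ∀ h ∈ {h : X ≃ᵢ X | h ∈ Γ ∧ dist x (h x) ≤ R + 2 * T},
        IsAsymptotic (U.map h) U → dist x (h x) + δ < gromovProduct x p (h p) := by
      rw [Filter.eventually_all_finite hfin]
      intro h _
      by_cases hU' : IsAsymptotic (U.map h) U
      · filter_upwards [hU'.eventually_lt_gromovProduct x (dist x (h x) + δ)] with p hp _
        exact hp
      · exact Eventually.of_forall fun p hp => absurd hp hU'
    obtain ⟨p, hp, hpA⟩ := (hev.and hA).exists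
    obtain ⟨y, hy, hyp⟩ := hσ.exists_extension x p (Nat.cast_nonneg (α := ℝ) T)
    obtain ⟨h, hhΓ, hh, hhU, hhS, hyR⟩ := hsmall y
    have hxT : dist x (h x) ≤ R + 2 * T := by
      have t1 := dist_triangle x y (h x)
      have t2 := dist_triangle y (h y) (h x)
      rw [h.dist_eq, dist_comm y x] at t2
      linarith
    refine ⟨y, h, hy, fun p' hp' => ?_, hhΓ, hh, hhS, hyR, ?_⟩
    · have h0 : gromovProduct x y p = 0 := by
        unfold gromovProduct
        linarith
      have h1 := hX.min_gromovProduct_sub_le x y p' p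
      rw [h0, gromovProduct_comm x p' p] at h1
      by_contra! hlt
      linarith [lt_min hlt (hAA p hpA p' hp')]
    · have := hX.displacement_le_of_between hδ h hyp (hp h ⟨hhΓ, hxT⟩ hhU)
      linarith
  choose y h hy hyA hhΓ hh hhS hyR hxR using step
  obtain ⟨h₀, -, hh₀⟩ := (((hyperfilter ℕ).map h).eq_pure_of_finite_mem
    (hΓ x (2 * R + 3 * δ)) (Ultrafilter.mem_map.2 (Filter.mem_of_superset Filter.univ_mem
      fun T _ => ⟨hhΓ T, hxR T⟩)))
  have hev : ∀ᶠ T in (hyperfilter ℕ : Filter ℕ), h T = h₀ := by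
    have : ({h₀} : Set (X ≃ᵢ X)) ∈ (hyperfilter ℕ).map h := by
      rw [hh₀]
      exact Ultrafilter.mem_pure.2 rfl
    exact this
  obtain ⟨T₀, hT₀⟩ := hev.exists
  have hV := (hT₀ ▸ hh T₀ : HasProperOrbits h₀).isAsymptotic_of_bounded hX x
    (U := (hyperfilter ℕ).map y) (R := R) (fun M => ?_) ?_
  · refine ⟨(hyperfilter ℕ).map y, ?_, Set.range y, Filter.range_mem_map, A', hA', ?_⟩
    · rw [← hhS T₀, hT₀]
      exact ⟨hV.1, hV.1.map_pow hX hV.2 2⟩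
    · rintro _ ⟨T, rfl⟩ p hp
      exact hyA T p hp
  · change ∀ᶠ T : ℕ in (hyperfilter ℕ : Filter ℕ), M < dist x (y T)
    refine Filter.Eventually.filter_mono Nat.hyperfilter_le_atTop ?_
    filter_upwards [tendsto_natCast_atTop_atTop.eventually_gt_atTop M] with T hT
    rwa [hy]
  · change ∀ᶠ T : ℕ in (hyperfilter ℕ : Filter ℕ), dist (y T) (h₀ (y T)) ≤ R
    filter_upwards [hev] with T hT
    rw [← hT]
    exact hyR T

/-- If every point of `X` is coarsely on a geodesic between two given ends, then finite subsets
of `X` are coarsely isometric to subsets of the line. -/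
lemma exists_coarse_coordinate {X : Type*} [MetricSpace X] {δ : ℝ}
    (hX : IsDeltaHyperbolic X δ) {U V : Ultrafilter X}
    (hline : ∀ z : X, ∃ B ∈ V, ∃ A ∈ U, ∀ y ∈ B, ∀ p ∈ A, gromovProduct z y p ≤ 2 * δ)
    {F : Set X} (hF : F.Finite) :
    ∃ f : X → ℝ, ∀ u ∈ F, ∀ v ∈ F,
      |f u - f v| ≤ dist u v ∧ dist u v ≤ |f u - f v| + 6 * δ := by
  choose B hB A hA hBA using hline
  obtain ⟨y, hy⟩ := V.nonempty_of_mem ((Filter.biInter_mem hF).2 fun z _ => hB z)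
  obtain ⟨p, hp⟩ := U.nonempty_of_mem ((Filter.biInter_mem hF).2 fun z _ => hA z)
  simp only [Set.mem_iInter] at hy hp
  refine ⟨fun z => dist z y, fun u hu v hv => ⟨abs_dist_sub_le u v y, ?_⟩⟩
  have h1 := hBA u y (hy u hu) p (hp u hu)
  have h2 := hBA v y (hy v hv) p (hp v hv)
  have h3 := hX u v y p
  unfold gromovProduct at h1 h2
  rcases max_cases (dist u y + dist v p) (dist u p + dist v y) with h' | h'
  · linarith [le_abs_self (dist u y - dist v y)]
  · linarith [neg_abs_le (dist u y - dist v y)]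

/-- In a coarse line the orbit of an infinite order isometry is coarsely dense. -/
lemma HasProperOrbits.exists_dist_zpow_le {X : Type*} [MetricSpace X] {δ : ℝ} {h : X ≃ᵢ X}
    (hh : HasProperOrbits h)
    (hline : ∀ F : Set X, F.Finite → ∃ f : X → ℝ, ∀ u ∈ F, ∀ v ∈ F,
      |f u - f v| ≤ dist u v ∧ dist u v ≤ |f u - f v| + 6 * δ) (x : X) :
    ∃ K : ℝ, ∀ y : X, ∃ n : ℤ, dist y ((h ^ n) x) ≤ K := by
  obtain ⟨k, hk⟩ : ∃ k : ℤ, 12 * δ < dist x ((h ^ k) x) ∧ 12 * δ < dist x ((h ^ (2 * k)) x) := by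
    have h1 := hh x (12 * δ)
    have h2 := h1.preimage (f := fun n : ℤ => 2 * n) (fun a _ b _ hab => by simpa using hab)
    obtain ⟨k, hk⟩ := (h1.union h2).exists_notMem
    refine ⟨k, ?_⟩
    simpa [not_or] using hk
  refine ⟨dist x ((h ^ k) x) + 6 * δ, fun y => ?_⟩
  have hfin : {n : ℤ | dist y ((h ^ n) x) ≤ dist y x}.Finite := by
    refine (hh x (2 * dist y x)).subset fun n hn => ?_
    simp only [Set.mem_ofPred_eq] at hn ⊢
    linarith [dist_triangle x y ((h ^ n) x), dist_comm x y]
  obtain ⟨n, hn, hmin⟩ := Set.exists_min_image _ (fun n : ℤ => dist y ((h ^ n) x)) hfin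
    ⟨0, by simp⟩
  have hmin' : ∀ m : ℤ, dist y ((h ^ n) x) ≤ dist y ((h ^ m) x) := by
    intro m
    by_cases hm : dist y ((h ^ m) x) ≤ dist y x
    · exact hmin m hm
    · exact le_trans hn (not_le.1 hm).le
  refine ⟨n, ?_⟩
  have hdist : ∀ a b : ℤ, dist ((h ^ a) x) ((h ^ b) x) = dist x ((h ^ (b - a)) x) := by
    intro a b
    rw [← (h ^ a).dist_eq x, ← IsometryEquiv.mul_apply, ← zpow_add]
    simp
  have d1 := hdist n (n + k)
  have d2 := hdist (n - k) n
  have d3 := hdist (n - k) (n + k)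
  rw [show n + k - n = k by ring] at d1
  rw [show n - (n - k) = k by ring] at d2
  rw [show n + k - (n - k) = 2 * k by ring] at d3
  have m1 := hmin' (n + k)
  have m2 := hmin' (n - k)
  obtain ⟨f, hf⟩ := hline {y, (h ^ n) x, (h ^ (n + k)) x, (h ^ (n - k)) x} (by simp)
  have f1 := hf y (by simp) ((h ^ n) x) (by simp)
  have f2 := hf y (by simp) ((h ^ (n + k)) x) (by simp)
  have f3 := hf y (by simp) ((h ^ (n - k)) x) (by simp)
  have f4 := hf ((h ^ n) x) (by simp) ((h ^ (n + k)) x) (by simp)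
  have f5 := hf ((h ^ (n - k)) x) (by simp) ((h ^ n) x) (by simp)
  have f6 := hf ((h ^ (n - k)) x) (by simp) ((h ^ (n + k)) x) (by simp)
  rw [d1] at f4
  rw [d2] at f5
  rw [d3] at f6
  obtain ⟨k1, k2⟩ := hk
  generalize dist x ((h ^ k) x) = a at *
  generalize dist x ((h ^ (2 * k)) x) = a₂ at *
  generalize dist y ((h ^ n) x) = D at *
  generalize dist y ((h ^ (n + k)) x) = D₁ at *
  generalize dist y ((h ^ (n - k)) x) = D₂ at *
  generalize f y = b at *
  generalize f ((h ^ n) x) = b₀ at *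
  generalize f ((h ^ (n + k)) x) = b₁ at *
  generalize f ((h ^ (n - k)) x) = b₂ at *
  by_contra! hlt
  rcases abs_cases (b - b₀) with c1 | c1 <;> rcases abs_cases (b - b₁) with c2 | c2 <;>
  rcases abs_cases (b - b₂) with c3 | c3 <;> rcases abs_cases (b₀ - b₁) with c4 | c4 <;>
  rcases abs_cases (b₂ - b₀) with c5 | c5 <;> rcases abs_cases (b₂ - b₁) with c6 | c6 <;>
  linarith

/-- If finitely many cosets of the powers of `h` cover a subgroup, then that subgroup is virtually
nilpotent. -/
lemma isVirtuallyNilpotent_of_finite {G : Type*} [Group G] (h : G) (K : Subgroup G) {F : Set G}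
    (hF : F.Finite) (hK : ∀ g ∈ K, ∃ n : ℤ, h ^ n * g ∈ F) : IsVirtuallyNilpotent K := by
  refine ⟨(Subgroup.zpowers h).subgroupOf K, ?_, ?_⟩
  · choose n hn using fun g : K => hK (g⁻¹ : K) (g⁻¹).2
    have : Finite F := hF
    have hinj : Function.Injective (fun q : K ⧸ (Subgroup.zpowers h).subgroupOf K =>
        (⟨_, hn q.out⟩ : F)) := by
      intro q q' hqq
      simp only [Subtype.mk.injEq] at hqq
      rw [← q.out_eq', ← q'.out_eq', QuotientGroup.eq, Subgroup.mem_subgroupOf]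
      refine ⟨n q'.out - n q.out, ?_⟩
      simp only [InvMemClass.coe_inv, Subgroup.coe_mul] at hqq ⊢
      rw [sub_eq_neg_add, zpow_add, zpow_neg, inv_mul_eq_iff_eq_mul, ← mul_assoc, hqq]
      group
    have := Finite.of_injective _ hinj
    exact Subgroup.finiteIndex_of_finite_quotient
  · let _ : CommGroup ((Subgroup.zpowers h).subgroupOf K) :=
      { (inferInstance : Group ((Subgroup.zpowers h).subgroupOf K)) with
        mul_comm := by
          rintro ⟨u, m, hm⟩ ⟨v, n, hn⟩
          ext
          change (u : G) * v = v * u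
          rw [← show h ^ m = (u : G) from hm, ← show h ^ n = (v : G) from hn]
          exact (Commute.refl h).zpow_zpow m n }
    exact CommGroup.isNilpotent

/-- In a virtually nilpotent group containing an infinite order element `g`, some nontrivial
element commutes with positive powers of both `g` and any other given element `h`. -/
lemma IsVirtuallyNilpotent.exists_commute_pow {G : Type*} [Group G] {K : Subgroup G}
    (hK : IsVirtuallyNilpotent K) {g h : G} (hg : g ∈ K) (hh : h ∈ K) (hgo : ¬ IsOfFinOrder g) :
    ∃ z ∈ K, z ≠ 1 ∧ ∃ m n : ℕ, 0 < m ∧ 0 < n ∧ Commute (g ^ m) z ∧ Commute (h ^ n) z := by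
  obtain ⟨N, hN, hnil⟩ := hK
  obtain ⟨m, hm, -, hgm⟩ := Subgroup.exists_pow_mem_of_index_ne_zero hN.index_ne_zero ⟨g, hg⟩
  obtain ⟨n, hn, -, hhn⟩ := Subgroup.exists_pow_mem_of_index_ne_zero hN.index_ne_zero ⟨h, hh⟩
  have hne : (⟨_, hgm⟩ : N) ≠ 1 := by
    intro h1
    refine hgo (isOfFinOrder_iff_pow_eq_one.2 ⟨m, hm, ?_⟩)
    simpa using congrArg (fun w : N => ((w : K) : G)) h1
  have : Nontrivial N := ⟨_, _, hne⟩
  obtain ⟨z, hz⟩ := (Subgroup.ne_bot_iff_exists_ne_one).1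
    (Group.IsNilpotent.center_ne_bot (G := N))
  refine ⟨((z : N) : K), ((z : N) : K).2, fun h1 => hz ?_, m, n, hm, hn, ?_, ?_⟩
  · ext
    simpa using h1
  · refine (commute_iff_eq _ _).2 ?_
    simpa using congrArg (fun w : N => ((w : K) : G)) (Subgroup.mem_center_iff.1 z.2 ⟨_, hgm⟩)
  · refine (commute_iff_eq _ _).2 ?_
    simpa using congrArg (fun w : N => ((w : K) : G)) (Subgroup.mem_center_iff.1 z.2 ⟨_, hhn⟩)

lemma IsDiscreteSubgroup.hasProperOrbits {X : Type*} [MetricSpace X] {Γ : Subgroup (X ≃ᵢ X)}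
    (hΓ : IsDiscreteSubgroup Γ) {g : X ≃ᵢ X} (hg : g ∈ Γ) (hgo : ¬ IsOfFinOrder g) :
    HasProperOrbits g := by
  intro x R
  refine ((hΓ x R).preimage (f := fun n : ℤ => g ^ n)
    (injective_zpow_iff_not_isOfFinOrder.2 hgo).injOn).subset fun n hn => ?_
  exact ⟨zpow_mem hg n, hn⟩

/-- **Corollary 1.4**: lower bound for the diastole of torsion-free groups:
`dias(Γ,X) = sup_x inf_{g ≠ 1} d(x, g x) ≥ ε₀`, rendered in junk-value-free form:
for every `r < ε₀` there is a point displaced at least `r` by all nontrivial elements.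
The hypothesis `hmarg` states that `nilrad(Γ,x) ≥ ε₀` for every `x ∈ X`. -/
theorem diastole_lower_bound
    (P₀ r₀ δ ε₀ : ℝ) (hP₀ : 0 < P₀) (hr₀ : 0 < r₀) (hδ : 0 < δ) (hε₀ : 0 < ε₀)
    (X : Type*) [MetricSpace X] [CompleteSpace X] (σ : X → X → ℝ → X)
    (hGCB : IsGCB σ) (hhyp : IsDeltaHyperbolic X δ) (hpack : IsPacked X P₀ r₀)
    (Γ : Subgroup (X ≃ᵢ X)) (hσΓ : ∀ g ∈ Γ, IsSigmaIsometry σ g)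
    (hdisc : IsDiscreteSubgroup Γ) (hne : IsNonElementary Γ)
    (htf : ∀ g ∈ Γ, g ≠ 1 → ¬ IsOfFinOrder g)
    (hmarg : ∀ x : X, ∀ r : ℝ, 0 ≤ r → r < ε₀ →
      IsVirtuallyNilpotent ↥(almostStabilizer Γ r x)) :
    ∀ r : ℝ, r < ε₀ →
      ∃ x : X, ∀ g ∈ Γ, g ≠ 1 → r ≤ dist x (g x) := by
  by_contra! hcon
  obtain ⟨r, hr, hcon⟩ := hcon
  obtain ⟨a, b, ha, hb, hab⟩ := hne
  rcases isEmpty_or_nonempty X with hempty | ⟨⟨x₀⟩⟩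
  · have : Subsingleton (X ≃ᵢ X) := ⟨fun f g => IsometryEquiv.ext fun x => hempty.elim x⟩
    exact hab ⟨⊤, inferInstance, inferInstance⟩
  have hproper : ∀ g ∈ Γ, g ≠ 1 → HasProperOrbits g := fun g hg hg1 =>
    hdisc.hasProperOrbits hg (htf g hg hg1)
  choose G hGΓ hG1 hGr using hcon
  have hGp : ∀ x, HasProperOrbits (G x) := fun x => hproper _ (hGΓ x) (hG1 x)
  have hr0 : 0 ≤ r := dist_nonneg.trans (hGr x₀).le
  have hpow : ∀ g ∈ Γ, g ≠ 1 → ∀ n : ℕ, 0 < n → HasProperOrbits (g ^ n) := by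
    refine fun g hg hg1 n hn => hproper _ (pow_mem hg n) fun h => ?_
    exact htf g hg hg1 (isOfFinOrder_iff_pow_eq_one.2 ⟨n, hn, h⟩)
  have hends : ∀ x, ∀ g ∈ Γ, g ≠ 1 → dist x (g x) ≤ r → limitEnds g = limitEnds (G x) := by
    intro x g hg hg1 hgr
    obtain ⟨z, hz, hz1, m, n, hm, hn, h1, h2⟩ := (hmarg x r hr0 hr).exists_commute_pow
      (Subgroup.subset_closure ⟨hg, hgr⟩) (Subgroup.subset_closure ⟨hGΓ x, (hGr x).le⟩)
      (htf g hg hg1)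
    have hzΓ : z ∈ Γ := (Subgroup.closure_le Γ).2 (fun w hw => hw.1) hz
    have pz := hproper z hzΓ hz1
    have pg := hproper g hg hg1
    have pgm := hpow g hg hg1 m hm
    have pGn := hpow _ (hGΓ x) (hG1 x) n hn
    rw [pg.limitEnds_eq_of_commute hhyp pgm x (Commute.self_pow g m),
      pgm.limitEnds_eq_of_commute hhyp pz x h1,
      (hGp x).limitEnds_eq_of_commute hhyp pGn x (Commute.self_pow (G x) n),
      pGn.limitEnds_eq_of_commute hhyp pz x h2]
  have hloc : IsLocallyConstant fun x => limitEnds (G x) := by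
    rw [IsLocallyConstant.iff_eventually_eq]
    intro x
    have hc : Continuous fun y => dist y (G x y) := continuous_id.dist (G x).continuous
    filter_upwards [hc.continuousAt.eventually_lt continuousAt_const (hGr x)] with y hy
    exact (hends y (G x) (hGΓ x) (hG1 x) hy.le).symm
  have := hGCB.preconnectedSpace
  have hconst : ∀ x, limitEnds (G x) = limitEnds (G x₀) := fun x =>
    hloc.apply_eq_of_preconnectedSpace x x₀
  obtain ⟨U, hU⟩ := (hGp x₀).limitEnds_nonempty hhyp x₀
  have hopp := exists_opposite_end (R := 2 * r) hδ.le hhyp hGCB hdisc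
    (S := limitEnds (G x₀)) hU.1 fun y => by
      refine ⟨G y ^ 2, pow_mem (hGΓ y) 2, (hGp y).sq, ?_, ?_, ?_⟩
      · exact (hconst y ▸ hU : U ∈ limitEnds (G y)).2
      · rw [← hconst y]
        exact (hGp y).sq.limitEnds_eq_of_commute hhyp (hGp y) y (Commute.pow_self (G y) 2)
      · refine (HasProperOrbits.dist_pow_le (G y) y 2).trans ?_
        push_cast
        linarith [hGr y]
  have hna : ∀ (x : X) (V : Ultrafilter X) (B A : Set X), B ∈ V → A ∈ U →
      (∀ y ∈ B, ∀ p ∈ A, gromovProduct x y p ≤ δ) → ¬ IsAsymptotic U V := by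
    intro x V B A hB hA hBA hUV
    obtain ⟨A', hA', B', hB', hAB'⟩ := hUV x δ
    obtain ⟨p, hp, hp'⟩ := U.nonempty_of_mem (Filter.inter_mem hA hA')
    obtain ⟨y, hy, hy'⟩ := V.nonempty_of_mem (Filter.inter_mem hB hB')
    have := hAB' p hp' y hy'
    rw [gromovProduct_comm] at this
    exact this.not_ge (hBA y hy p hp)
  obtain ⟨V, hV, B₀, hB₀, A₀, hA₀, hBA₀⟩ := hopp x₀
  have hline : ∀ z : X, ∃ B ∈ V, ∃ A ∈ U, ∀ y ∈ B, ∀ p ∈ A, gromovProduct z y p ≤ 2 * δ := by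
    intro z
    obtain ⟨W, hW, B, hB, A, hA, hBA⟩ := hopp z
    have hVW : IsAsymptotic V W := by
      rcases (hGp x₀).sq.asymptotic_of_three hhyp x₀ hU.1 hV.1 hW.1 hU.2 hV.2 hW.2 with h | h | h
      · exact absurd h (hna x₀ V B₀ A₀ hB₀ hA₀ hBA₀)
      · exact absurd h (hna z W B A hB hA hBA)
      · exact h
    obtain ⟨C, hC, B', hB', hCB⟩ := hVW z (2 * δ)
    obtain ⟨w, hw, hw'⟩ := W.nonempty_of_mem (Filter.inter_mem hB hB')
    refine ⟨C, hC, A, hA, fun y hy p hp => ?_⟩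
    have h1 := hhyp.min_gromovProduct_sub_le z w y p
    rw [gromovProduct_comm z w y] at h1
    by_contra! hlt
    linarith [lt_min (hCB y hy w hw') hlt, hBA w hw p hp]
  obtain ⟨K, hK⟩ := (hGp x₀).exists_dist_zpow_le
    (fun F hF => exists_coarse_coordinate hhyp hline hF) x₀
  refine hab (isVirtuallyNilpotent_of_finite (G x₀) _ (hdisc x₀ K) fun g hg => ?_)
  have hgΓ : g ∈ Γ := by
    refine (Subgroup.closure_le Γ).2 ?_ hg
    rintro w (rfl | rfl)
    exacts [ha, hb]
  obtain ⟨n, hn⟩ := hK (g x₀)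
  refine ⟨-n, mul_mem (zpow_mem (hGΓ x₀) _) hgΓ, ?_⟩
  rw [← (G x₀ ^ n).dist_eq, ← IsometryEquiv.mul_apply (G x₀ ^ n), zpow_neg, mul_inv_cancel_left,
    dist_comm]
  exact hn
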